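/- Fix permutations π_1, …, π_r with sizes summing to K, and let c^ρ_{π_1,…,π_r} = d^ρ_{π_1,…,π_r} / binom(K; |π_1|,…,|π_r|). Then there is a constant C (depending only on π_1,…,π_r) such that for every n and every permutation σ of size n: |∏_{i=1}^r occ(π_i, σ) − Σ_{ρ∈S_K} c^ρ_{π_1,…,π_r} occ(ρ, σ)| ≤ C/n. -/

import Mathlib

/-! The product `∏ occ(π_i, σ)` is the proportion, among all tuples `(I_1, …, I_r)` of sets of positions
with `|I_i| = |π_i|`, of those with `pat_{I_i}(σ) = π_i` for all `i`. The sum `∑ c^ρ occ(ρ, σ)` is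
the same proportion among the tuples of pairwise disjoint sets. Indeed such a tuple amounts to its
union `J`, a set of `K` positions, together with an ordered set partition of `J ≃ [K]`, and patterns
are transitive (`patL_patL`), so the favourable tuples with union `J` are counted by `d^ρ` with
`ρ = pat_J(σ)` (`card_partitions_eq`); the total number of disjoint tuples is the multinomial
coefficient times `binom(n, K)` (`card_disjointTuples`).

Passing to disjoint tuples changes the proportion by at most the proportion of tuples that are not
disjoint (`abs_div_sub_div_le`). That is at most `K ^ 2 / n` by Bernoulli's inequality
(`card_disjointTuples_ge`), so `C = K ^ 2` works. For `n < K` there are no disjoint tuples and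
the trivial bound `1 ≤ K ^ 2 / n` suffices.
-/


/-- Subsequence of a list given by a set of (0-indexed) positions. -/
def subseqAt (l : List ℕ) (I : Finset ℕ) : List ℕ :=
  ((List.range l.length).filter (· ∈ I)).map (fun i => l.getD i 0)

/-- Standardization of a list of distinct values: each value is replaced by its rank
(1-indexed) among the values of the list. -/
def List.std (l : List ℕ) : List ℕ := l.map (fun x => (l.filter (· < x)).length + 1)

/-- The pattern of the permutation `l` (one-line notation) induced by the set `I`
of (0-indexed) positions. -/
def patL (l : List ℕ) (I : Finset ℕ) : List ℕ := (subseqAt l I).std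

/-- `occL p σ` is the proportion of occurrences of the pattern `p` in the permutation `σ`
(both in one-line notation): the number of `|p|`-element sets of positions of `σ` inducing
the pattern `p`, divided by `binom(|σ|, |p|)`. -/
noncomputable def occL (p σ : List ℕ) : ℝ :=
  (((Finset.range σ.length).powerset.filter (fun I => patL σ I = p)).card : ℝ) /
    (σ.length.choose p.length)

/-! ### Subsequences, standardization and transitivity of patterns -/

theorem subseqAt_map (f : ℕ → ℕ) (m : List ℕ) (P : Finset ℕ) :
    subseqAt (m.map f) P = (subseqAt m P).map f := by
  simp only [subseqAt, List.length_map, List.map_map]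
  apply List.map_congr_left
  intro i hi
  have hi' : i < m.length := by simpa using (List.mem_filter.1 hi).1
  simp [hi']

theorem List.std_map_of_lt_iff (f : ℕ → ℕ) (m : List ℕ)
    (hf : ∀ x ∈ m, ∀ y ∈ m, f x < f y ↔ x < y) : (m.map f).std = m.std := by
  simp only [List.std, List.map_map]
  apply List.map_congr_left
  intro y hy
  simp only [Function.comp, List.filter_map, List.length_map]
  congr 2
  apply List.filter_congr
  intro x hx
  simp [hf x hx y hy]

/-- The rank function used by `List.std` is strictly increasing on the entries of the list. -/
theorem rank_lt_iff (m : List ℕ) (x : ℕ) (hx : x ∈ m) (y : ℕ) (hy : y ∈ m) :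
    (m.filter (· < x)).length + 1 < (m.filter (· < y)).length + 1 ↔ x < y := by
  have key : ∀ a b, a ∈ m → a < b →
      (m.filter (· < a)).length < (m.filter (· < b)).length := by
    intro a b ha hab
    have h1 : m.filter (· < a) = (m.filter (· < b)).filter (· < a) := by
      rw [List.filter_filter]
      apply List.filter_congr
      intro z _
      simp only [← Bool.decide_and, decide_eq_decide]
      omega
    rw [h1, List.length_filter_lt_length_iff_exists]
    exact ⟨a, by simp [ha, hab], by simp⟩
  have h1 := key x y hx
  have h2 := key y x hy
  rcases lt_trichotomy x y with h | h | h
  · have := h1 h; omega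
  · subst h; omega
  · have := h2 h; omega

theorem List.std_perm (m : List ℕ) (hm : m.Nodup) : m.std.Perm (List.range' 1 m.length) := by
  have hnd : m.std.Nodup := by
    refine List.Nodup.map_on ?_ hm
    intro x hx y hy hxy
    have h1 := rank_lt_iff m x hx y hy
    have h2 := rank_lt_iff m y hy x hx
    omega
  have hsub : m.std ⊆ List.range' 1 m.length := by
    intro z hz
    obtain ⟨x, hx, rfl⟩ := List.mem_map.1 hz
    have : (m.filter (· < x)).length < m.length := by
      rw [List.length_filter_lt_length_iff_exists]
      exact ⟨x, hx, by simp⟩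
    rw [List.mem_range'_1]
    omega
  exact (hnd.subperm hsub).perm_of_length_le (by simp [List.std])

theorem length_subseqAt (l : List ℕ) (J : Finset ℕ) (hJ : J ⊆ Finset.range l.length) :
    (subseqAt l J).length = J.card := by
  have hnd : ((List.range l.length).filter (· ∈ J)).Nodup := List.nodup_range.filter _
  rw [subseqAt, List.length_map, ← List.toFinset_card_of_nodup hnd]
  congr 1
  ext x
  simp only [List.toFinset_filter, List.mem_toFinset, Finset.mem_filter, List.mem_range,
    decide_eq_true_eq]
  exact ⟨fun h => h.2, fun h => ⟨by simpa using hJ h, h⟩⟩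

theorem length_patL (l : List ℕ) (J : Finset ℕ) (hJ : J ⊆ Finset.range l.length) :
    (patL l J).length = J.card := by
  rw [patL, List.std, List.length_map, length_subseqAt l J hJ]

theorem subseqAt_nodup (l : List ℕ) (hl : l.Nodup) (J : Finset ℕ) : (subseqAt l J).Nodup := by
  refine List.Nodup.map_on ?_ (List.nodup_range.filter _)
  intro x hx y hy hxy
  have hx' : x < l.length := by simpa using (List.mem_filter.1 hx).1
  have hy' : y < l.length := by simpa using (List.mem_filter.1 hy).1
  rw [List.getD_eq_getElem _ _ hx', List.getD_eq_getElem _ _ hy'] at hxy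
  exact (hl.getElem_inj_iff).1 hxy

theorem patL_mem_permutations (l : List ℕ) (hl : l.Nodup) (J : Finset ℕ)
    (hJ : J ⊆ Finset.range l.length) :
    patL l J ∈ (List.range' 1 J.card).permutations.toFinset := by
  rw [List.mem_toFinset, List.mem_permutations, ← length_subseqAt l J hJ]
  exact List.std_perm _ (subseqAt_nodup l hl J)

theorem filter_range_eq_sort (n : ℕ) (J : Finset ℕ) (hJ : J ⊆ Finset.range n) :
    (List.range n).filter (· ∈ J) = J.sort := by
  refine List.SortedLT.eq_of_mem_iff ?_ J.sortedLT_sort ?_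
  · exact ((List.pairwise_lt_range).filter _).sortedLT
  · intro a
    simp only [List.mem_filter, List.mem_range, decide_eq_true_eq, Finset.mem_sort]
    exact ⟨fun h => h.2, fun h => ⟨by simpa using hJ h, h⟩⟩

/-- Taking subsequences is transitive: positions `P` of the subsequence at `J` are the positions
`e '' P` of the original list, `e` being the increasing enumeration of `J`. -/
theorem subseqAt_subseqAt {K : ℕ} (l : List ℕ) (J : Finset ℕ) (hJ : J ⊆ Finset.range l.length)
    (hK : J.card = K) (P : Finset (Fin K)) :
    subseqAt (subseqAt l J) (P.image Fin.val) = subseqAt l (P.image (J.orderEmbOfFin hK)) := by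
  have hlen : (subseqAt l J).length = K := (length_subseqAt l J hJ).trans hK
  have hPJ : P.image (J.orderEmbOfFin hK) ⊆ Finset.range l.length := by
    intro x hx
    obtain ⟨i, _, rfl⟩ := Finset.mem_image.1 hx
    exact hJ (J.orderEmbOfFin_mem hK i)
  have h1 : (List.range K).filter (· ∈ P.image Fin.val) = P.sort.map Fin.val := by
    refine List.SortedLT.eq_of_mem_iff ?_ ?_ ?_
    · exact ((List.pairwise_lt_range).filter _).sortedLT
    · exact (List.pairwise_map.2
        (P.sortedLT_sort.pairwise.imp fun {a b} (h : a < b) => (h : a.val < b.val))).sortedLT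
    · intro a
      simp only [List.mem_filter, List.mem_range, decide_eq_true_eq, Finset.mem_image,
        List.mem_map, Finset.mem_sort]
      exact ⟨fun h => h.2, fun h => ⟨by obtain ⟨i, _, rfl⟩ := h; exact i.2, h⟩⟩
  have h2 : (List.range l.length).filter (· ∈ P.image (J.orderEmbOfFin hK)) =
      P.sort.map (J.orderEmbOfFin hK) := by
    rw [filter_range_eq_sort _ _ hPJ]
    refine List.SortedLT.eq_of_mem_iff (Finset.sortedLT_sort _) ?_ (by simp)
    exact (List.pairwise_map.2
      (P.sortedLT_sort.pairwise.imp fun h => (J.orderEmbOfFin hK).strictMono h)).sortedLT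
  rw [subseqAt.eq_1 (subseqAt l J), hlen, h1, subseqAt.eq_1 l (P.image _), h2]
  simp only [List.map_map]
  apply List.map_congr_left
  intro i _
  simp only [Function.comp, subseqAt, filter_range_eq_sort _ _ hJ, Finset.orderEmbOfFin_apply]
  rw [List.getD_eq_getElem _ _ (by simp [hK])]
  simp

/-- Patterns are transitive: the pattern at `P` of the pattern at `J` is the pattern of the original
list at the corresponding positions in `J`, since standardizing does not change relative order. -/
theorem patL_patL {K : ℕ} (l : List ℕ) (J : Finset ℕ) (hJ : J ⊆ Finset.range l.length)
    (hK : J.card = K) (P : Finset (Fin K)) :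
    patL (patL l J) (P.image Fin.val) = patL l (P.image (J.orderEmbOfFin hK)) := by
  have hlen : (subseqAt l J).length = K := (length_subseqAt l J hJ).trans hK
  rw [patL.eq_1 (patL l J), patL.eq_1 l J, List.std.eq_1 (subseqAt l J), subseqAt_map,
    List.std_map_of_lt_iff, subseqAt_subseqAt l J hJ hK, patL]
  have hmem : ∀ x ∈ subseqAt (subseqAt l J) (P.image Fin.val), x ∈ subseqAt l J := by
    intro x hx
    obtain ⟨i, hi, rfl⟩ := List.mem_map.1 hx
    have hi' : i < (subseqAt l J).length := by simpa using (List.mem_filter.1 hi).1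
    rw [List.getD_eq_getElem _ _ hi']
    exact List.getElem_mem _
  exact fun x hx y hy => rank_lt_iff _ x (hmem x hx) y (hmem y hy)

/-! ### Counting tuples of disjoint sets -/

open Classical in
/-- The `r`-tuples of pairwise disjoint subsets of `S` of prescribed sizes `k i`. -/
noncomputable def disjointTuples {r : ℕ} (k : Fin r → ℕ) (S : Finset ℕ) :
    Finset (Fin r → Finset ℕ) :=
  (Fintype.piFinset fun i => S.powersetCard (k i)).filter
    fun I => ∀ i j, i ≠ j → Disjoint (I i) (I j)

theorem mem_disjointTuples {r : ℕ} {k : Fin r → ℕ} {S : Finset ℕ} {I : Fin r → Finset ℕ} :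
    I ∈ disjointTuples k S ↔
      (∀ i, I i ⊆ S ∧ (I i).card = k i) ∧ ∀ i j, i ≠ j → Disjoint (I i) (I j) := by
  simp [disjointTuples, Fintype.mem_piFinset, Finset.mem_powersetCard]

/-- By induction on `r`, choosing the first set of the tuple and then the others in its complement;
clearing the factorials turns the count into a falling factorial. -/
theorem card_disjointTuples_mul {r : ℕ} (k : Fin r → ℕ) (S : Finset ℕ) :
    (disjointTuples k S).card * ∏ i, (k i).factorial = S.card.descFactorial (∑ i, k i) := by
  induction r generalizing S with
  | zero =>
    have : disjointTuples k S = Finset.univ := by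
      ext I
      simp only [mem_disjointTuples, Finset.mem_univ, iff_true]
      exact ⟨fun i => i.elim0, fun i => i.elim0⟩
    simp [this]
  | succ r ih =>
    have hfib : ∀ A ∈ S.powersetCard (k 0),
        ((disjointTuples k S).filter fun I => I 0 = A).card =
          (disjointTuples (fun i => k i.succ) (S \ A)).card := by
      intro A hA
      rw [Finset.mem_powersetCard] at hA
      refine Finset.card_nbij' (fun I => Fin.tail I) (fun I => Fin.cons A I) ?_ ?_ ?_ ?_
      · intro I hI
        simp only [Finset.coe_filter, Set.mem_ofPred_eq, mem_disjointTuples] at hI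
        obtain ⟨⟨h1, h2⟩, rfl⟩ := hI
        simp only [Finset.mem_coe, mem_disjointTuples, Fin.tail]
        refine ⟨fun i => ⟨Finset.subset_sdiff.2 ⟨(h1 _).1, h2 _ _ (Fin.succ_ne_zero i)⟩,
          (h1 _).2⟩, fun i j hij => h2 _ _ (fun h => hij (Fin.succ_injective _ h))⟩
      · intro I hI
        simp only [Finset.mem_coe, mem_disjointTuples, Finset.subset_sdiff] at hI
        obtain ⟨h1, h2⟩ := hI
        simp only [Finset.coe_filter, Set.mem_ofPred_eq, mem_disjointTuples, Fin.cons_zero,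
          and_true]
        refine ⟨fun i => ?_, fun i j => ?_⟩
        · cases i using Fin.cases with
          | zero => simpa using hA
          | succ i => simpa using ⟨(h1 i).1.1, (h1 i).2⟩
        · cases i using Fin.cases with
          | zero =>
            cases j using Fin.cases with
            | zero => simp
            | succ j => intro _; simpa using (h1 j).1.2.symm
          | succ i =>
            cases j using Fin.cases with
            | zero => intro _; simpa using (h1 i).1.2
            | succ j => intro h; simpa using h2 i j (fun h' => h (by rw [h']))
      · intro I hI
        simp only [Finset.coe_filter, Set.mem_ofPred_eq] at hI
        rw [← hI.2]
        exact Fin.cons_self_tail I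
      · intro I _
        exact Fin.tail_cons _ _
    have hmaps : ∀ I ∈ disjointTuples k S, I 0 ∈ S.powersetCard (k 0) := fun I hI =>
      Finset.mem_powersetCard.2 ((mem_disjointTuples.1 hI).1 0)
    rw [Finset.card_eq_sum_card_fiberwise hmaps, Finset.sum_congr rfl hfib, Fin.prod_univ_succ,
      Fin.sum_univ_succ, Finset.sum_mul]
    have hterm : ∀ A ∈ S.powersetCard (k 0),
        (disjointTuples (fun i => k i.succ) (S \ A)).card *
          ((k 0).factorial * ∏ i : Fin r, (k i.succ).factorial) =
        (k 0).factorial * (S.card - k 0).descFactorial (∑ i : Fin r, k i.succ) := by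
      intro A hA
      rw [Finset.mem_powersetCard] at hA
      have := ih (fun i => k i.succ) (S \ A)
      rw [Finset.card_sdiff_of_subset hA.1, hA.2] at this
      rw [← this]
      ring
    rw [Finset.sum_congr rfl hterm, Finset.sum_const, Finset.card_powersetCard, smul_eq_mul,
      ← mul_assoc, mul_comm (S.card.choose _), ← Nat.descFactorial_eq_factorial_mul_choose]
    have := Nat.descFactorial_mul_descFactorial (n := S.card) (k := k 0)
      (m := k 0 + ∑ i : Fin r, k i.succ) (Nat.le_add_right _ _)
    rw [Nat.add_sub_cancel_left] at this
    rw [← this, mul_comm]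

theorem card_disjointTuples {r : ℕ} (k : Fin r → ℕ) (S : Finset ℕ) :
    (disjointTuples k S).card =
      Nat.multinomial Finset.univ k * S.card.choose (∑ i, k i) := by
  have hpos : 0 < ∏ i, (k i).factorial := Finset.prod_pos fun i _ => Nat.factorial_pos _
  apply Nat.eq_of_mul_eq_mul_right hpos
  rw [card_disjointTuples_mul, Nat.descFactorial_eq_factorial_mul_choose,
    ← Nat.multinomial_spec Finset.univ k]
  ring

/-- Almost all tuples are disjoint: the proportion of tuples of subsets of an `n`-element set that
overlap is at most `K ^ 2 / n`, by Bernoulli's inequality. -/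
theorem card_disjointTuples_ge {r : ℕ} (k : Fin r → ℕ) (S : Finset ℕ) (hn : 1 ≤ S.card)
    (hK : ∑ i, k i ≤ S.card) :
    (1 - ((∑ i, k i : ℕ) : ℝ) ^ 2 / S.card) * ∏ i, (S.card.choose (k i) : ℝ) ≤
      (disjointTuples k S).card := by
  set n := S.card with hndef
  set K := ∑ i, k i with hKdef
  have hn0 : (0 : ℝ) < n := by exact_mod_cast hn
  have hKn : (K : ℝ) ≤ n := by exact_mod_cast hK
  have hK0 : (0 : ℝ) ≤ K := Nat.cast_nonneg _
  have hF : (0 : ℝ) < ∏ i, ((k i).factorial : ℝ) :=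
    Finset.prod_pos fun i _ => by exact_mod_cast Nat.factorial_pos _
  have hT : (∏ i, (n.choose (k i) : ℝ)) * ∏ i, ((k i).factorial : ℝ) ≤ (n : ℝ) ^ K := by
    rw [hKdef, ← Finset.prod_pow_eq_pow_sum, ← Finset.prod_mul_distrib]
    refine Finset.prod_le_prod (fun i _ => by positivity) fun i _ => ?_
    have := Nat.descFactorial_le_pow n (k i)
    rw [Nat.descFactorial_eq_factorial_mul_choose, mul_comm] at this
    exact_mod_cast this
  have hD : ((disjointTuples k S).card : ℝ) * ∏ i, ((k i).factorial : ℝ) =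
      (n.descFactorial K : ℝ) := by
    exact_mod_cast card_disjointTuples_mul k S
  have hdesc : ((n : ℝ) - K) ^ K ≤ (n.descFactorial K : ℝ) := by
    have h1 := Nat.pow_sub_le_descFactorial n K
    have h2 : (n - K) ^ K ≤ n.descFactorial K :=
      (Nat.pow_le_pow_left (by omega) K).trans h1
    have h3 : (((n - K) ^ K : ℕ) : ℝ) ≤ (n.descFactorial K : ℝ) := by exact_mod_cast h2
    rwa [Nat.cast_pow, Nat.cast_sub hK] at h3
  have hB : 1 - (K : ℝ) ^ 2 / n ≤ (1 - K / n) ^ K := by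
    have h := one_add_mul_le_pow (a := -((K : ℝ) / n))
      (by have := (div_le_one hn0).2 hKn; linarith) K
    calc 1 - (K : ℝ) ^ 2 / n = 1 + K * -((K : ℝ) / n) := by ring
      _ ≤ _ := h
      _ = _ := by ring
  have hbase : (0 : ℝ) ≤ 1 - K / n := by
    have := (div_le_one hn0).2 hKn
    linarith
  refine le_of_mul_le_mul_right ?_ hF
  rw [hD]
  calc (1 - (K : ℝ) ^ 2 / n) * (∏ i, (n.choose (k i) : ℝ)) * ∏ i, ((k i).factorial : ℝ)
      ≤ (1 - K / n) ^ K * ((∏ i, (n.choose (k i) : ℝ)) * ∏ i, ((k i).factorial : ℝ)) := by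
        rw [mul_assoc]
        exact mul_le_mul_of_nonneg_right hB (by positivity)
    _ ≤ (1 - K / n) ^ K * (n : ℝ) ^ K := mul_le_mul_of_nonneg_left hT (pow_nonneg hbase _)
    _ = ((n : ℝ) - K) ^ K := by
        rw [← mul_pow]
        congr 1
        field_simp
    _ ≤ _ := hdesc

/-! ### Disjoint occurrences and the coefficients `d^ρ` -/

/-- Disjoint pattern occurrences with union `J` correspond to the ordered set partitions of `[K]`
counted by `d^ρ`, where `ρ` is the pattern of `σ` at `J`. -/
theorem card_partitions_eq {r K : ℕ} (π : Fin r → List ℕ) (σ : List ℕ) (J : Finset ℕ) (hJ : J ⊆ Finset.range σ.length) (hJK : J.card = K) :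
    Nat.card {P : Fin r → Finset (Fin K) //
        (∀ i j, i ≠ j → Disjoint (P i) (P j)) ∧
        Finset.univ.biUnion P = Finset.univ ∧
        (∀ i, (P i).card = (π i).length) ∧
        (∀ i, patL (patL σ J) ((P i).image Fin.val) = π i)} =
      (((disjointTuples (fun i => (π i).length) (Finset.range σ.length)).filter
        fun I => ∀ i, patL σ (I i) = π i).filter fun I => Finset.univ.biUnion I = J).card := by
  classical
  set e := J.orderEmbOfFin hJK with he
  have hmem : ∀ x, e x ∈ J := fun x => J.orderEmbOfFin_mem hJK x
  have hsurj : ∀ y ∈ J, ∃ x, e x = y := by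
    intro y hy
    have : y ∈ Set.range e := by rw [he, Finset.range_orderEmbOfFin]; exact hy
    exact this
  have himg : ∀ A ⊆ J, (Finset.univ.filter fun x => e x ∈ A).image e = A := by
    intro A hA
    ext y
    simp only [Finset.mem_image, Finset.mem_filter, Finset.mem_univ, true_and]
    constructor
    · rintro ⟨x, hx, rfl⟩; exact hx
    · intro hy
      obtain ⟨x, rfl⟩ := hsurj y (hA hy)
      exact ⟨x, hy, rfl⟩
  rw [Nat.card_eq_fintype_card, Fintype.card_subtype]
  refine Finset.card_nbij' (fun P i => (P i).image e)
    (fun I i => Finset.univ.filter fun x => e x ∈ I i) ?_ ?_ ?_ ?_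
  · intro P hP
    simp only [Finset.coe_filter, Set.mem_ofPred_eq, Finset.mem_univ, true_and] at hP
    obtain ⟨h1, h2, h3, h4⟩ := hP
    simp only [Finset.coe_filter, Set.mem_ofPred_eq, Finset.mem_filter, mem_disjointTuples]
    refine ⟨⟨⟨fun i => ⟨?_, ?_⟩, fun i j hij => ?_⟩, fun i => ?_⟩, ?_⟩
    · intro y hy
      obtain ⟨x, _, rfl⟩ := Finset.mem_image.1 hy
      exact hJ (hmem x)
    · rw [Finset.card_image_of_injective _ e.injective, h3]
    · exact (Finset.disjoint_image e.injective).2 (h1 i j hij)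
    · rw [← h4 i, patL_patL σ J hJ hJK]
    · ext y
      simp only [Finset.mem_biUnion, Finset.mem_univ, true_and, Finset.mem_image]
      constructor
      · rintro ⟨i, x, _, rfl⟩; exact hmem x
      · intro hy
        obtain ⟨x, rfl⟩ := hsurj y hy
        have hx : x ∈ Finset.univ.biUnion P := by rw [h2]; exact Finset.mem_univ x
        obtain ⟨i, _, hi⟩ := Finset.mem_biUnion.1 hx
        exact ⟨i, x, hi, rfl⟩
  · intro I hI
    simp only [Finset.coe_filter, Set.mem_ofPred_eq, Finset.mem_filter, mem_disjointTuples] at hI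
    obtain ⟨⟨⟨h1, h2⟩, h3⟩, h4⟩ := hI
    have hIJ : ∀ i, I i ⊆ J := fun i => by
      rw [← h4]; exact Finset.subset_biUnion_of_mem I (Finset.mem_univ i)
    simp only [Finset.coe_filter, Set.mem_ofPred_eq, Finset.mem_univ, true_and]
    refine ⟨fun i j hij => ?_, ?_, fun i => ?_, fun i => ?_⟩
    · rw [Finset.disjoint_left]
      intro x hx hx'
      exact Finset.disjoint_left.1 (h2 i j hij) (Finset.mem_filter.1 hx).2
        (Finset.mem_filter.1 hx').2
    · ext x
      have hx := hmem x
      rw [← h4] at hx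
      simpa using hx
    · rw [← Finset.card_image_of_injective _ e.injective, himg _ (hIJ i), (h1 i).2]
    · rw [patL_patL σ J hJ hJK, ← he, himg _ (hIJ i), h3]
  · intro P _
    funext i
    ext x
    simp
  · intro I hI
    simp only [Finset.coe_filter, Set.mem_ofPred_eq] at hI
    funext i
    refine himg _ ?_
    rw [← hI.2]; exact Finset.subset_biUnion_of_mem I (Finset.mem_univ i)

/-! ### The estimate -/

/-- Restricting a proportion `q / t` to a subset of size `d` of the `t` outcomes, where it becomes
`a / d`, changes it by at most the proportion of discarded outcomes; `hcross` says that
at most `t - d` of the `q` favourable outcomes are discarded. -/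
theorem abs_div_sub_div_le {a d q t : ℝ} (ha0 : 0 ≤ a) (had : a ≤ d) (haq : a ≤ q) (hdt : d ≤ t)
    (hcross : q + d ≤ t + a) (hd : 0 < d) : |q / t - a / d| ≤ 1 - d / t := by
  have ht : 0 < t := hd.trans_le hdt
  have haqt : a / t ≤ q / t := div_le_div_of_nonneg_right haq ht.le
  have hadt : a / t ≤ a / d := div_le_div_of_nonneg_left ha0 hd hdt
  rw [abs_le]
  constructor
  · have h1 : a / d - a / t ≤ 1 - d / t := by
      have h2 : a / d - a / t = a / d * (1 - d / t) := by
        field_simp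
      rw [h2]
      refine mul_le_of_le_one_left ?_ (div_le_one_of_le₀ had hd.le)
      have := (div_le_one ht).2 hdt
      linarith
    linarith
  · have h1 : q / t - a / t ≤ 1 - d / t := by
      rw [← sub_div, one_sub_div ht.ne']
      exact div_le_div_of_nonneg_right (by linarith) ht.le
    linarith

/-- Fix patterns `π_1, …, π_r` with sizes summing to `K`, and let
`c^ρ = d^ρ / binom(K; k_1,…,k_r)`. There is a constant `C` (depending only on the `π_i`)
such that for every `n ≥ 1` and every permutation `σ` of size `n`,
`|∏_i occ(π_i, σ) − Σ_{ρ ∈ S_K} c^ρ · occ(ρ, σ)| ≤ C/n`. -/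
theorem prod_occ_approx_sum_occ
    (r K : ℕ) (π : Fin r → List ℕ)
    (hπ : ∀ i, (π i).Perm (List.range' 1 (π i).length))
    (hK : ∑ i, (π i).length = K) :
    ∃ C : ℝ, ∀ n : ℕ, 1 ≤ n → ∀ σ : List ℕ, σ.Perm (List.range' 1 n) →
      |∏ i, occL (π i) σ -
        ∑ ρ ∈ ((List.range' 1 K).permutations).toFinset,
          ((Nat.card {P : Fin r → Finset (Fin K) //
              (∀ i j, i ≠ j → Disjoint (P i) (P j)) ∧
              Finset.univ.biUnion P = Finset.univ ∧
              (∀ i, (P i).card = (π i).length) ∧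
              (∀ i, patL ρ ((P i).image Fin.val) = π i)} : ℝ) /
            (Nat.multinomial Finset.univ (fun i => (π i).length))) * occL ρ σ|
        ≤ C / n := by
  refine ⟨(K : ℝ) ^ 2, fun n hn σ hσ => ?_⟩
  have hlen : σ.length = n := by simpa using hσ.length_eq
  have hnd : σ.Nodup := hσ.nodup_iff.2 List.nodup_range'
  set d : List ℕ → ℕ := fun ρ => Nat.card {P : Fin r → Finset (Fin K) //
              (∀ i j, i ≠ j → Disjoint (P i) (P j)) ∧
              Finset.univ.biUnion P = Finset.univ ∧
              (∀ i, (P i).card = (π i).length) ∧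
              (∀ i, patL ρ ((P i).image Fin.val) = π i)} with hd
  set k : Fin r → ℕ := fun i => (π i).length with hk
  set M := Nat.multinomial Finset.univ k with hM
  set S := Finset.range σ.length with hS
  have hSn : S.card = n := by rw [hS, Finset.card_range, hlen]
  set T := Fintype.piFinset fun i => S.powersetCard (k i) with hT
  set D := disjointTuples k S with hD
  set Q := Fintype.piFinset fun i => S.powerset.filter fun I => patL σ I = π i with hQ
  set A := D.filter fun I => ∀ i, patL σ (I i) = π i with hA
  have hQT : Q ⊆ T := by
    intro I hI
    rw [hQ, Fintype.mem_piFinset] at hI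
    rw [hT, Fintype.mem_piFinset]
    intro i
    obtain ⟨h1, h2⟩ := Finset.mem_filter.1 (hI i)
    rw [Finset.mem_powerset] at h1
    exact Finset.mem_powersetCard.2 ⟨h1, by rw [← length_patL σ _ h1, h2]⟩
  have hDT : D ⊆ T := Finset.filter_subset _ _
  have hAD : A ⊆ D := Finset.filter_subset _ _
  have hAQ : A = Q ∩ D := by
    ext I
    simp only [hA, hQ, Finset.mem_filter, Finset.mem_inter, Fintype.mem_piFinset,
      Finset.mem_powerset]
    constructor
    · rintro ⟨h1, h2⟩
      exact ⟨fun i => ⟨((mem_disjointTuples.1 h1).1 i).1, h2 i⟩, h1⟩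
    · rintro ⟨h1, h2⟩
      exact ⟨h2, fun i => (h1 i).2⟩
  have hTcard : (T.card : ℝ) = ∏ i, (n.choose (k i) : ℝ) := by
    rw [hT, Fintype.card_piFinset]
    simp [hSn]
  have hprod : ∏ i, occL (π i) σ = (Q.card : ℝ) / T.card := by
    rw [hTcard, hQ, Fintype.card_piFinset, Nat.cast_prod, ← Finset.prod_div_distrib]
    refine Finset.prod_congr rfl fun i _ => ?_
    rw [occL, hlen, ← hlen]
  have hDcard : D.card = M * n.choose K := by
    rw [hD, card_disjointTuples, hSn, hK]
  have hAcard : A.card = ∑ ρ ∈ ((List.range' 1 K).permutations).toFinset,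
      d ρ * (S.powerset.filter fun I => patL σ I = ρ).card := by
    have hmaps : ∀ I ∈ A, Finset.univ.biUnion I ∈ S.powersetCard K := by
      intro I hI
      obtain ⟨h1, h2⟩ := mem_disjointTuples.1 (hAD hI)
      rw [Finset.mem_powersetCard]
      refine ⟨Finset.biUnion_subset.2 fun i _ => (h1 i).1, ?_⟩
      rw [Finset.card_biUnion fun i _ j _ hij => h2 i j hij, ← hK]
      exact Finset.sum_congr rfl fun i _ => (h1 i).2
    have hmaps2 : ∀ J ∈ S.powersetCard K,
        patL σ J ∈ ((List.range' 1 K).permutations).toFinset := by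
      intro J hJ
      obtain ⟨h1, h2⟩ := Finset.mem_powersetCard.1 hJ
      have := patL_mem_permutations σ hnd J h1
      rwa [h2] at this
    rw [Finset.card_eq_sum_card_fiberwise hmaps, ← Finset.sum_fiberwise_of_maps_to hmaps2]
    refine Finset.sum_congr rfl fun ρ hρ => ?_
    have hρlen : ρ.length = K := by
      rw [List.mem_toFinset, List.mem_permutations] at hρ
      simpa using hρ.length_eq
    have hset : (S.powerset.filter fun I => patL σ I = ρ) =
        (S.powersetCard K).filter fun J => patL σ J = ρ := by
      ext J
      simp only [Finset.mem_filter, Finset.mem_powerset, Finset.mem_powersetCard]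
      constructor
      · rintro ⟨h1, h2⟩
        exact ⟨⟨h1, by rw [← length_patL σ J h1, h2, hρlen]⟩, h2⟩
      · rintro ⟨⟨h1, _⟩, h2⟩
        exact ⟨h1, h2⟩
    rw [hset, mul_comm, ← smul_eq_mul, ← Finset.sum_const]
    refine Finset.sum_congr rfl fun J hJ => ?_
    obtain ⟨h1, h2⟩ := Finset.mem_filter.1 hJ
    obtain ⟨h3, h4⟩ := Finset.mem_powersetCard.1 h1
    rw [← h2]
    exact (card_partitions_eq π σ J h3 h4).symm
  have hsum : ∑ ρ ∈ ((List.range' 1 K).permutations).toFinset,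
      ((d ρ : ℝ) / M) * occL ρ σ = (A.card : ℝ) / D.card := by
    rw [hDcard, hAcard, Nat.cast_sum, Finset.sum_div]
    refine Finset.sum_congr rfl fun ρ hρ => ?_
    have hρlen : ρ.length = K := by
      rw [List.mem_toFinset, List.mem_permutations] at hρ
      simpa using hρ.length_eq
    rw [occL, hρlen, hlen, ← hlen, ← hS]
    push_cast
    rw [div_mul_div_comm]
  have hn0 : (0 : ℝ) < n := by exact_mod_cast hn
  rw [hprod, hsum]
  have hq : (Q.card : ℝ) ≤ T.card := by exact_mod_cast Finset.card_le_card hQT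
  have ha : (A.card : ℝ) ≤ D.card := by exact_mod_cast Finset.card_le_card hAD
  have hdt : (D.card : ℝ) ≤ T.card := by exact_mod_cast Finset.card_le_card hDT
  have haq : (A.card : ℝ) ≤ Q.card := by
    exact_mod_cast Finset.card_le_card (hAQ ▸ Finset.inter_subset_left)
  have hcross : (Q.card : ℝ) + D.card ≤ T.card + A.card := by
    have h1 := Finset.card_union_add_card_inter Q D
    have h2 := Finset.card_le_card (Finset.union_subset hQT hDT)
    rw [← hAQ] at h1
    have : Q.card + D.card ≤ T.card + A.card := by omega
    exact_mod_cast this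
  have ha0 : (0 : ℝ) ≤ A.card := Nat.cast_nonneg _
  rcases lt_or_ge n K with hlt | hge
  · -- No `K` positions exist, so the sum vanishes while the product lies in `[0, 1]`.
    have hD0 : D.card = 0 := by rw [hDcard, Nat.choose_eq_zero_of_lt hlt, mul_zero]
    have hnK : (n : ℝ) + 1 ≤ K := by exact_mod_cast hlt
    rw [hD0, Nat.cast_zero, div_zero, sub_zero, abs_of_nonneg (by positivity)]
    refine (div_le_one_of_le₀ hq (Nat.cast_nonneg _)).trans ?_
    rw [le_div_iff₀ hn0]
    nlinarith
  · have hbern := card_disjointTuples_ge k S (by omega) (by rw [hSn]; exact hK.le.trans hge)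
    rw [hSn, ← hTcard, hK, ← hD] at hbern
    have hDpos : (0 : ℝ) < D.card := by
      rw [hDcard]
      exact_mod_cast Nat.mul_pos (Nat.multinomial_pos _ _) (Nat.choose_pos hge)
    have hTpos : (0 : ℝ) < T.card := hDpos.trans_le hdt
    have hratio : 1 - (D.card : ℝ) / T.card ≤ (K : ℝ) ^ 2 / n := by
      have := (le_div_iff₀ hTpos).2 hbern
      linarith
    exact (abs_div_sub_div_le ha0 ha haq hdt hcross hDpos).trans hratio
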